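/- Let h ∈ Schwartz(ℝ^n), let u : ℝ^n → ℝ^n be Lipschitz (or with ∇u ∈ L^r), let θ_q ∈ L^∞, and define the commutator [Δ_q, u·∇]θ_q (x) = 2^{qn} ∫ h(2^q(x−y)) (u(y) − u(x))·∇θ_q(y) dy. Then for 1 ≤ r ≤ ∞, ‖[Δ_q, u·∇]θ_q‖_{L^r} ≤ C ‖∇u‖_{L^r} ‖θ_q‖_{L^∞}, with C depending only on h and n (independent of q). -/

import Mathlib

open MeasureTheory ENNReal
open scoped RealInnerProductSpace

theorem ibp_aux {E : Type*} [NormedAddCommGroup E] [NormedSpace ℝ E] [FiniteDimensional ℝ E]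
    [MeasurableSpace E] [BorelSpace E] (μ : Measure E) [μ.IsAddHaarMeasure]
    {C D : NNReal} {f g : E → ℝ} (hf : LipschitzWith C f) (hg : LipschitzWith D g)
    (fi : Integrable f μ) (gi : Integrable g μ) (M : ℝ) (fb : ∀ x, ‖f x‖ ≤ M) (v : E) :
    ∫ x, lineDeriv ℝ f x v * g x ∂μ = ∫ x, lineDeriv ℝ g x (-v) * f x ∂μ := by
  have A := hf.integral_inv_smul_sub_mul_tendsto_integral_lineDeriv_mul gi v
  have B := hg.integral_inv_smul_sub_mul_tendsto_integral_lineDeriv_mul fi (-v)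
  suffices S1 : ∀ (t : ℝ), ∫ x, (t⁻¹ • (f (x + t • v) - f x)) * g x ∂μ =
                            ∫ x, (t⁻¹ • (g (x + t • (-v)) - g x)) * f x ∂μ by
    simp only [S1] at A; exact tendsto_nhds_unique A B
  intro t
  suffices S2 : ∫ x, (f (x + t • v) - f x) * g x ∂μ = ∫ x, f x * (g (x + t • (-v)) - g x) ∂μ by
    simp only [smul_eq_mul, mul_assoc, integral_const_mul, S2, mul_comm (f _)]
  have S3 : ∫ x, f (x + t • v) * g x ∂μ = ∫ x, f x * g (x + t • (-v)) ∂μ := by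
    rw [← integral_add_right_eq_self _ (t • (-v))]; simp
  simp_rw [_root_.sub_mul, _root_.mul_sub]
  have key : ∀ a b : E, Integrable (fun x => f (x + a) * g (x + b)) μ := by
    intro a b
    refine (gi.comp_add_right b).bdd_mul (c := M) ?_ ?_
    · exact (hf.continuous.comp (continuous_add_const _)).aestronglyMeasurable
    · exact Filter.Eventually.of_forall fun x => fb _
  rw [integral_sub, integral_sub, S3]
  · simpa using key 0 (t • (-v))
  · simpa using key 0 0
  · simpa using key (t • v) 0
  · simpa using key 0 0

theorem conv_bound {E P : Type*} [NormedAddCommGroup E] [NormedSpace ℝ E] [FiniteDimensional ℝ E]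
    [MeasurableSpace E] [BorelSpace E] (ν : Measure E) [ν.IsAddHaarMeasure]
    [MeasurableSpace P] (μ : Measure P) [IsFiniteMeasure μ] (τ : P → E) (hτ : Measurable τ)
    (g : E → ℝ≥0∞) (hg : Measurable g) (r : ℝ≥0∞) (hr : 1 ≤ r) :
    eLpNorm (fun x => ∫⁻ p, g (x - τ p) ∂μ) r ν ≤ μ Set.univ * eLpNorm g r ν := by
  have hm : Measurable (fun z : E × P => g (z.1 - τ z.2)) := by fun_prop
  by_cases hT : r = ⊤
  · subst hT
    simp only [eLpNorm_exponent_top]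
    have h1 : ∀ᵐ x ∂ν, ∀ᵐ p ∂μ, g (x - τ p) ≤ eLpNormEssSup g ν := by
      refine (Measure.ae_ae_comm (p := fun x p => g (x - τ p) ≤ eLpNormEssSup g ν)
        (measurableSet_le hm measurable_const)).2 ?_
      refine Filter.Eventually.of_forall fun p => ?_
      have := enorm_ae_le_eLpNormEssSup g ν
      exact (measurePreserving_sub_right ν (τ p)).quasiMeasurePreserving.ae this
    refine essSup_le_of_ae_le _ ?_
    filter_upwards [h1] with x hx
    simp only [enorm_eq_self]
    calc ∫⁻ p, g (x - τ p) ∂μ ≤ ∫⁻ p, eLpNormEssSup g ν ∂μ := lintegral_mono_ae hx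
      _ = _ := by rw [lintegral_const, mul_comm]
  · have hr0 : r ≠ 0 := (zero_lt_one.trans_le hr).ne'
    have hs : 1 ≤ r.toReal := by
      rw [← ENNReal.toReal_one]; exact ENNReal.toReal_mono hT hr
    set s := r.toReal
    have hs0 : 0 < s := by linarith
    rw [eLpNorm_eq_lintegral_rpow_enorm_toReal hr0 hT, eLpNorm_eq_lintegral_rpow_enorm_toReal hr0 hT]
    simp only [enorm_eq_self]
    have h1 : ∀ x, (∫⁻ p, g (x - τ p) ∂μ) ^ s ≤ (∫⁻ p, g (x - τ p) ^ s ∂μ) * μ Set.univ ^ (s - 1) := by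
      intro x
      have := eLpNorm'_le_eLpNorm'_mul_rpow_measure_univ (μ := μ) (f := fun p => g (x - τ p)) zero_lt_one hs
        (by have : Measurable fun p => g (x - τ p) := by fun_prop
            exact this.aestronglyMeasurable)
      simp only [eLpNorm', enorm_eq_self, ENNReal.rpow_one, div_one] at this
      calc _ ≤ _ := ENNReal.rpow_le_rpow this hs0.le
        _ = _ := by
          rw [ENNReal.mul_rpow_of_nonneg _ _ hs0.le, ← ENNReal.rpow_mul, ← ENNReal.rpow_mul]
          congr 2
          · rw [one_div_mul_cancel hs0.ne', ENNReal.rpow_one]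
          · field_simp
    have h2 : ∫⁻ x, (∫⁻ p, g (x - τ p) ∂μ) ^ s ∂ν ≤ μ Set.univ ^ s * ∫⁻ x, g x ^ s ∂ν := by
      calc _ ≤ ∫⁻ x, (∫⁻ p, g (x - τ p) ^ s ∂μ) * μ Set.univ ^ (s - 1) ∂ν := lintegral_mono h1
        _ = (∫⁻ x, (∫⁻ p, g (x - τ p) ^ s ∂μ) ∂ν) * μ Set.univ ^ (s - 1) := by
          rw [lintegral_mul_const']
          exact ENNReal.rpow_ne_top_of_nonneg (by linarith) (measure_ne_top _ _)
        _ = (∫⁻ p, (∫⁻ x, g (x - τ p) ^ s ∂ν) ∂μ) * μ Set.univ ^ (s - 1) := by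
          rw [lintegral_lintegral_swap]
          exact (hm.pow_const s).aemeasurable
        _ = (∫⁻ p, (∫⁻ x, g x ^ s ∂ν) ∂μ) * μ Set.univ ^ (s - 1) := by
          congr 2; ext p
          exact lintegral_sub_right_eq_self (fun x => g x ^ s) (τ p)
        _ = _ := by
          rw [lintegral_const, mul_assoc, mul_comm]
          congr 1
          nth_rw 1 [← ENNReal.rpow_one (μ Set.univ)]
          rw [← ENNReal.rpow_add_of_nonneg _ _ zero_le_one (by linarith)]
          congr 1; ring
    calc _ ≤ _ := ENNReal.rpow_le_rpow h2 (by positivity)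
      _ = _ := by
        rw [ENNReal.mul_rpow_of_nonneg _ _ (by positivity), ← ENNReal.rpow_mul,
          mul_one_div_cancel hs0.ne', ENNReal.rpow_one]

/-- FTC bound along a segment. -/
theorem ftc_bound {E : Type*} [NormedAddCommGroup E] [InnerProductSpace ℝ E] 
    {C : NNReal} {u : E → E} (hu : LipschitzWith C u) (x w : E)
    (hd : ∀ᵐ t ∂(volume.restrict (Set.Icc (0:ℝ) 1)), DifferentiableAt ℝ u (x - t • w)) :
    ‖u (x - w) - u x‖ₑ ≤ ‖w‖ₑ * ∫⁻ t in Set.Icc (0:ℝ) 1, ‖fderiv ℝ u (x - t • w)‖ₑ := by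
  by_cases h0 : u (x - w) - u x = 0
  · simp [h0]
  set a := u (x - w) - u x with ha
  set e : E := (‖a‖⁻¹ : ℝ) • a
  have he : ‖e‖ = 1 := by simp [e, norm_smul, h0]
  let φ : ℝ → ℝ := fun t => ⟪e, u (x - t • w)⟫
  have hφ : LipschitzWith (C * ‖w‖₊) φ := by
    refine LipschitzWith.of_dist_le_mul fun s t => ?_
    simp only [φ, Real.dist_eq, ← inner_sub_right]
    calc _ ≤ ‖e‖ * ‖u (x - s • w) - u (x - t • w)‖ := abs_real_inner_le_norm _ _
      _ ≤ 1 * (C * ‖(x - s • w) - (x - t • w)‖) := by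
        rw [he]; gcongr; exact hu.norm_sub_le _ _
      _ = _ := by
        have : (x - s • w) - (x - t • w) = (t - s) • w := by rw [sub_smul]; abel
        rw [this, norm_smul, Real.norm_eq_abs, abs_sub_comm]; push_cast; ring
  have hac : AbsolutelyContinuousOnInterval φ 0 1 :=
    (hφ.lipschitzOnWith (s := Set.uIcc 0 1)).absolutelyContinuousOnInterval
  have h1 := hac.integral_deriv_eq_sub
  have h2 : φ 1 - φ 0 = ‖a‖ := by
    simp only [φ, ← inner_sub_right, one_smul, zero_smul, sub_zero]
    rw [← ha]
    simp only [e, inner_smul_left, real_inner_self_eq_norm_sq]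
    have : ‖a‖ ≠ 0 := by simpa using h0
    simp; field_simp
  have h3 : ∀ᵐ t ∂(volume.restrict (Set.Icc (0:ℝ) 1)), ‖deriv φ t‖ₑ ≤ ‖w‖ₑ * ‖fderiv ℝ u (x - t • w)‖ₑ := by
    filter_upwards [hd] with t ht
    have hl : HasDerivAt (fun t : ℝ => x - t • w) (-w) t := by
      simpa using ((hasDerivAt_id t).smul_const w).const_sub x
    have h4 : HasDerivAt φ ⟪e, fderiv ℝ u (x - t • w) (-w)⟫ t := by
      have := (ht.hasFDerivAt.comp_hasDerivAt t hl)
      simpa using (hasDerivAt_const t e).inner ℝ this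
    rw [h4.deriv, mul_comm]
    simp only [← ofReal_norm, ← ENNReal.ofReal_mul (norm_nonneg _)]
    apply ENNReal.ofReal_le_ofReal
    calc _ ≤ ‖e‖ * ‖fderiv ℝ u (x - t • w) (-w)‖ := norm_inner_le_norm _ _
      _ ≤ 1 * (‖fderiv ℝ u (x - t • w)‖ * ‖-w‖) := by
        rw [he]; gcongr; exact ContinuousLinearMap.le_opNorm _ _
      _ = _ := by simp
  calc ‖a‖ₑ = ‖φ 1 - φ 0‖ₑ := by rw [h2, enorm_norm]
    _ = ‖∫ t in Set.Icc (0:ℝ) 1, deriv φ t‖ₑ := by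
      rw [← h1, intervalIntegral.integral_of_le zero_le_one, integral_Icc_eq_integral_Ioc]
    _ ≤ ∫⁻ t in Set.Icc (0:ℝ) 1, ‖deriv φ t‖ₑ := enorm_integral_le_lintegral_enorm _
    _ ≤ ∫⁻ t in Set.Icc (0:ℝ) 1, ‖w‖ₑ * ‖fderiv ℝ u (x - t • w)‖ₑ := lintegral_mono_ae h3
    _ = _ := by rw [lintegral_const_mul' _ _ (by simp)]

theorem schwartz_mul_lip {E : Type*} [NormedAddCommGroup E] [NormedSpace ℝ E]
    [FiniteDimensional ℝ E] [MeasurableSpace E] [BorelSpace E]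
    (μ : Measure E) [μ.IsAddHaarMeasure]
    (k : SchwartzMap E ℝ) {K : NNReal} {f : E → ℝ} (hf : LipschitzWith K f) (f0 : f 0 = 0) :
    (∃ D : NNReal, LipschitzWith D (fun w => k w * f w)) ∧ Integrable (fun w => k w * f w) μ ∧
      ∃ M : ℝ, ∀ w, ‖k w * f w‖ ≤ M := by
  have hfb : ∀ w, ‖f w‖ ≤ K * ‖w‖ := by
    intro w
    have := hf.norm_sub_le w 0
    simpa [f0] using this
  obtain ⟨c0, c0p, hc0⟩ := k.decay 0 0
  obtain ⟨c1, c1p, hc1⟩ := k.decay 1 0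
  obtain ⟨d0, d0p, hd0⟩ := (SchwartzMap.fderivCLM ℝ E ℝ k).decay 0 0
  obtain ⟨d1, d1p, hd1⟩ := (SchwartzMap.fderivCLM ℝ E ℝ k).decay 1 0
  simp only [pow_zero, one_mul, pow_one, norm_iteratedFDeriv_zero, SchwartzMap.fderivCLM_apply]
    at hc0 hc1 hd0 hd1
  have hM : ∀ w, ‖k w * f w‖ ≤ K * c1 := by
    intro w
    rw [norm_mul]
    calc _ ≤ ‖k w‖ * (K * ‖w‖) := by gcongr; exact hfb w
      _ = K * (‖w‖ * ‖k w‖) := by ring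
      _ ≤ _ := by gcongr; exact hc1 w
  refine ⟨?_, ?_, _, hM⟩
  · refine ⟨⟨2 * (K * c1) + (K * (d1 + d0) + K * c0), by positivity⟩,
      LipschitzWith.of_dist_le_mul fun y z => ?_⟩
    rw [dist_eq_norm, dist_eq_norm]
    change _ ≤ (2 * (K * c1) + (K * (d1 + d0) + K * c0)) * ‖y - z‖
    have hn := norm_nonneg (y - z)
    rcases le_total 1 ‖y - z‖ with h1 | h1
    · calc _ ≤ ‖k y * f y‖ + ‖k z * f z‖ := norm_sub_le _ _
        _ ≤ (2 * (K * c1)) * 1 := by linarith [hM y, hM z]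
        _ ≤ (2 * (K * c1)) * ‖y - z‖ := by gcongr
        _ ≤ _ := by
          gcongr
          have : 0 ≤ K * (d1 + d0) + K * c0 := by positivity
          linarith
    · have hseg : ‖k y - k z‖ * ‖y‖ ≤ (d1 + d0) * ‖y - z‖ := by
        have hdiff : ∀ w ∈ segment ℝ z y, ‖fderiv ℝ k w‖ * ‖y‖ ≤ d1 + d0 := by
          intro w hw
          have h2 : ‖y - w‖ ≤ 1 := by
            rw [segment_symm] at hw
            refine le_trans ?_ h1
            have := (convex_closedBall y ‖y - z‖).segment_subset (x := y) (y := z)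
              (by simp) (by simp [dist_eq_norm, norm_sub_rev]) hw
            simpa [dist_eq_norm, norm_sub_rev] using this
          have h3 : ‖y‖ ≤ ‖w‖ + 1 := by
            calc ‖y‖ = ‖w + (y - w)‖ := by congr 1; abel
              _ ≤ _ := (norm_add_le _ _).trans (by linarith)
          calc _ ≤ ‖fderiv ℝ k w‖ * (‖w‖ + 1) := by gcongr
            _ = ‖w‖ * ‖fderiv ℝ k w‖ + ‖fderiv ℝ k w‖ := by ring
            _ ≤ _ := add_le_add (hd1 w) (hd0 w)
        rcases eq_or_ne y 0 with rfl | hy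
        · simp; positivity
        · have hy' : 0 < ‖y‖ := norm_pos_iff.2 hy
          have := (convex_segment z y).norm_image_sub_le_of_norm_fderiv_le (𝕜 := ℝ) (f := k)
            (C := (d1 + d0) / ‖y‖) (fun w _ => k.differentiableAt)
            (fun w hw => by rw [le_div_iff₀ hy']; exact hdiff w hw)
            (left_mem_segment ℝ z y) (right_mem_segment ℝ z y)
          calc _ ≤ ((d1 + d0) / ‖y‖ * ‖y - z‖) * ‖y‖ := by gcongr
            _ = _ := by field_simp
      calc ‖k y * f y - k z * f z‖ = ‖(k y - k z) * f y + k z * (f y - f z)‖ := by congr 1; ring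
        _ ≤ ‖k y - k z‖ * ‖f y‖ + ‖k z‖ * ‖f y - f z‖ := by
          refine (norm_add_le _ _).trans ?_; rw [norm_mul, norm_mul]
        _ ≤ ‖k y - k z‖ * (K * ‖y‖) + c0 * (K * ‖y - z‖) := by
          gcongr
          · exact hfb y
          · exact hc0 z
          · exact hf.norm_sub_le _ _
        _ = K * (‖k y - k z‖ * ‖y‖) + c0 * (K * ‖y - z‖) := by ring
        _ ≤ K * ((d1 + d0) * ‖y - z‖) + c0 * (K * ‖y - z‖) := by gcongr
        _ ≤ _ := by
          have : 0 ≤ 2 * (K * c1) * ‖y - z‖ := by positivity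
          nlinarith
  · refine Integrable.mono' ((k.integrable_pow_mul μ 1).const_mul (K : ℝ)) ?_ ?_
    · exact (k.continuous.mul hf.continuous).aestronglyMeasurable
    · refine Filter.Eventually.of_forall fun w => ?_
      rw [norm_mul]
      calc _ ≤ ‖k w‖ * (K * ‖w‖) := by gcongr; exact hfb w
        _ = _ := by ring

theorem term_bound {E : Type*} [NormedAddCommGroup E] [InnerProductSpace ℝ E]
    [FiniteDimensional ℝ E] [MeasurableSpace E] [BorelSpace E]
    (k θ : SchwartzMap E ℝ) {K : NNReal} {u : E → E} (hu : LipschitzWith K u)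
    (L : E →L[ℝ] ℝ) (hL : ‖L‖ ≤ 1) (v : E) (hv : ‖v‖ ≤ 1) (x : E) :
    Integrable (fun y => k (x - y) * L (u y - u x) * fderiv ℝ θ y v) ∧
    ‖∫ y, k (x - y) * L (u y - u x) * fderiv ℝ θ y v‖ₑ ≤
      eLpNorm θ ⊤ volume * ∫⁻ w, (‖fderiv ℝ k w‖ₑ * ‖u (x - w) - u x‖ₑ +
        ‖k w‖ₑ * ‖fderiv ℝ u (x - w)‖ₑ) := by
  set f : E → ℝ := fun w => L (u (x - w) - u x) with hf
  have hfl : LipschitzWith K f := by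
    refine LipschitzWith.of_dist_le_mul fun a b => ?_
    simp only [f, dist_eq_norm, ← map_sub]
    calc _ ≤ ‖L‖ * ‖_‖ := L.le_opNorm _
      _ ≤ 1 * (K * ‖(x - a) - (x - b)‖) := by
        gcongr
        rw [sub_sub_sub_cancel_right]
        exact hu.norm_sub_le _ _
      _ = _ := by rw [show x - a - (x - b) = b - a by abel, norm_sub_rev, one_mul]
  obtain ⟨⟨D, hD⟩, hI, M, hM⟩ := schwartz_mul_lip volume k hfl (by simp [f])
  set F : E → ℝ := fun y => k (x - y) * L (u y - u x) with hF
  have hFe : F = fun y => (fun w => k w * f w) (x - y) := by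
    ext y; simp [F, f]
  have hFl : LipschitzWith D F := by
    rw [hFe]
    refine LipschitzWith.of_dist_le_mul fun a b => ?_
    have := hD.dist_le_mul (x - a) (x - b)
    rwa [dist_sub_left] at this
  have hFI : Integrable F volume := by
    rw [hFe]; exact hI.comp_sub_left x
  have hFb : ∀ y, ‖F y‖ ≤ M := fun y => by rw [hFe]; exact hM _
  obtain ⟨Dθ, hθ⟩ : ∃ D : NNReal, LipschitzWith D θ := by
    obtain ⟨d0, d0p, hd0⟩ := (SchwartzMap.fderivCLM ℝ E ℝ θ).decay 0 0
    simp only [pow_zero, one_mul, norm_iteratedFDeriv_zero, SchwartzMap.fderivCLM_apply] at hd0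
    exact ⟨⟨d0, d0p.le⟩, lipschitzWith_of_nnnorm_fderiv_le θ.differentiable fun y => hd0 y⟩
  have hθ' : ∀ y w, lineDeriv ℝ θ y w = fderiv ℝ θ y w := fun y w =>
    θ.differentiableAt.lineDeriv_eq_fderiv
  have hint : Integrable (fun y => fderiv ℝ θ y v) := by
    have := (SchwartzMap.fderivCLM ℝ E ℝ θ).integrable (μ := volume)
    exact (this.apply_continuousLinearMap v)
  refine ⟨hint.bdd_mul (c := M) hFI.1 (Filter.Eventually.of_forall hFb), ?_⟩
  have hibp := ibp_aux volume hFl hθ hFI θ.integrable M hFb v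
  simp only [hθ', map_neg, neg_mul, integral_neg] at hibp
  have h1 : ‖∫ y, F y * fderiv ℝ θ y v‖ₑ = ‖∫ y, lineDeriv ℝ F y v * θ y‖ₑ := by
    rw [hibp, enorm_neg]; simp only [mul_comm]
  change ‖∫ y, F y * fderiv ℝ θ y v‖ₑ ≤ _
  rw [h1]
  have h2 : ∀ᵐ y, ‖lineDeriv ℝ F y v * θ y‖ₑ ≤ eLpNorm θ ⊤ volume *
      (‖fderiv ℝ k (x - y)‖ₑ * ‖u y - u x‖ₑ + ‖k (x - y)‖ₑ * ‖fderiv ℝ u y‖ₑ) := by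
    have hM : ∀ᵐ y, ‖θ y‖ₑ ≤ eLpNorm θ ⊤ volume := by
      rw [eLpNorm_exponent_top]; exact enorm_ae_le_eLpNormEssSup θ volume
    filter_upwards [hM, hu.ae_differentiableAt (μ := volume)] with y hy hd
    rw [enorm_mul, mul_comm]
    gcongr
    have e1 : HasFDerivAt (fun y => k (x - y)) (-(fderiv ℝ k (x - y))) y := by
      have h := (k.differentiableAt (x := x - y)).hasFDerivAt.comp y ((hasFDerivAt_id y).const_sub x)
      have h' : fderiv ℝ k (x - y) ∘L (-ContinuousLinearMap.id ℝ E) = -(fderiv ℝ k (x - y)) := by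
        ext; simp
      rw [h'] at h
      exact h
    have e2 : HasFDerivAt (fun y => L (u y - u x)) (L ∘L fderiv ℝ u y) y :=
      L.hasFDerivAt.comp y (hd.hasFDerivAt.sub_const _)
    have e3 := (e1.mul e2).hasLineDerivAt v
    have e4 : lineDeriv ℝ F y v = _ := e3.lineDeriv
    rw [e4]
    simp only [← ofReal_norm, ← ENNReal.ofReal_mul (norm_nonneg _)]
    rw [← ENNReal.ofReal_add (by positivity) (by positivity)]
    apply ENNReal.ofReal_le_ofReal
    simp only [_root_.add_apply, _root_.smul_apply, ContinuousLinearMap.comp_apply, _root_.neg_apply, smul_eq_mul]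
    refine (norm_add_le _ _).trans ?_
    rw [norm_mul, norm_mul, norm_neg, add_comm]
    have b1 : ‖L (fderiv ℝ u y v)‖ ≤ ‖fderiv ℝ u y‖ := by
      calc _ ≤ ‖L‖ * (‖fderiv ℝ u y‖ * ‖v‖) := (L.le_opNorm _).trans (by gcongr; exact ContinuousLinearMap.le_opNorm _ _)
        _ ≤ 1 * (‖fderiv ℝ u y‖ * 1) := by gcongr
        _ = _ := by ring
    have b2 : ‖L (u y - u x)‖ ≤ ‖u y - u x‖ := by
      calc _ ≤ ‖L‖ * ‖u y - u x‖ := (L.le_opNorm _)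
        _ ≤ 1 * ‖u y - u x‖ := by gcongr
        _ = _ := by ring
    have b3 : ‖fderiv ℝ k (x - y) v‖ ≤ ‖fderiv ℝ k (x - y)‖ := by
      calc _ ≤ ‖fderiv ℝ k (x - y)‖ * ‖v‖ := ContinuousLinearMap.le_opNorm _ _
        _ ≤ ‖fderiv ℝ k (x - y)‖ * 1 := by gcongr
        _ = _ := by ring
    have b4 : ‖L (u y - u x)‖ * ‖fderiv ℝ k (x - y) v‖ ≤ ‖fderiv ℝ k (x - y)‖ * ‖u y - u x‖ := by
      rw [mul_comm]; gcongr
    exact add_le_add b4 (by gcongr)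
  calc _ ≤ ∫⁻ y, ‖lineDeriv ℝ F y v * θ y‖ₑ := enorm_integral_le_lintegral_enorm _
    _ ≤ _ := lintegral_mono_ae h2
    _ = eLpNorm θ ⊤ volume * ∫⁻ y, (‖fderiv ℝ k (x - y)‖ₑ * ‖u y - u x‖ₑ + ‖k (x - y)‖ₑ * ‖fderiv ℝ u y‖ₑ) := by
      rw [lintegral_const_mul' _ _ (by exact (θ.memLp ⊤ volume).2.ne)]
    _ = _ := by
      congr 1
      rw [← lintegral_sub_left_eq_self _ x]
      simp

theorem core_bound (n : ℕ) (k θ : SchwartzMap (EuclideanSpace ℝ (Fin n)) ℝ) {K : NNReal}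
    {u : EuclideanSpace ℝ (Fin n) → EuclideanSpace ℝ (Fin n)} (hu : LipschitzWith K u)
    (r : ℝ≥0∞) (hr : 1 ≤ r) :
    eLpNorm (fun x => ∫ y, k (x - y) * ⟪u y - u x, gradient (⇑θ) y⟫) r volume ≤
      (n * eLpNorm θ ⊤ volume) * ((∫⁻ w, ‖fderiv ℝ k w‖ₑ * ‖w‖ₑ) + ∫⁻ w, ‖k w‖ₑ) *
        eLpNorm (fun x => ‖fderiv ℝ u x‖) r volume := by
  let E := EuclideanSpace ℝ (Fin n)
  have hmk : Measurable (fun w : E => ‖fderiv ℝ k w‖ₑ) := (measurable_fderiv ℝ k).enorm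
  have hmk0 : Measurable (fun w : E => ‖k w‖ₑ) := k.continuous.measurable.enorm
  have hmu : Measurable (fun w : E => ‖fderiv ℝ u w‖ₑ) := (measurable_fderiv ℝ u).enorm
  have hM : eLpNorm θ ⊤ volume ≠ ⊤ := (θ.memLp ⊤ volume).2.ne
  -- pointwise bound
  have hpt : ∀ x : E, ‖∫ y, k (x - y) * ⟪u y - u x, gradient (⇑θ) y⟫‖ₑ ≤
      (n * eLpNorm θ ⊤ volume) * ∫⁻ w, (‖fderiv ℝ k w‖ₑ * ‖u (x - w) - u x‖ₑ +
        ‖k w‖ₑ * ‖fderiv ℝ u (x - w)‖ₑ) := by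
    intro x
    let b := EuclideanSpace.basisFun (Fin n) ℝ
    have hb : ∀ i, ‖b i‖ = 1 := fun i => b.orthonormal.1 i
    have ht : ∀ i, _ := fun i => term_bound k θ hu (innerSL ℝ (b i))
      (by rw [innerSL_apply_norm, hb]) (b i) (hb i).le x
    have he : ∀ y, k (x - y) * ⟪u y - u x, gradient (⇑θ) y⟫ =
        ∑ i, k (x - y) * (innerSL ℝ (b i)) (u y - u x) * fderiv ℝ θ y (b i) := by
      intro y
      have h1 : ⟪u y - u x, gradient (⇑θ) y⟫ = fderiv ℝ θ y (u y - u x) := by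
        rw [real_inner_comm, gradient, InnerProductSpace.toDual_symm_apply]
      rw [h1]
      conv_lhs => rw [← b.sum_repr' (u y - u x)]
      simp [Finset.mul_sum, mul_assoc]
    simp_rw [he]
    rw [integral_finsetSum _ (fun i _ => (ht i).1)]
    refine (enorm_sum_le _ _).trans ?_
    refine (Finset.sum_le_sum fun i _ => (ht i).2).trans ?_
    simp [mul_assoc]
  -- the measure
  let c : ℝ≥0∞ := n * eLpNorm θ ⊤ volume
  have hc : c ≠ ⊤ := ENNReal.mul_ne_top (by simp) hM
  let ρA : E → ℝ≥0∞ := fun w => ‖fderiv ℝ k w‖ₑ * ‖w‖ₑ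
  let ρB : E → ℝ≥0∞ := fun w => ‖k w‖ₑ
  have hρA : Measurable ρA := hmk.mul measurable_enorm
  have hAfin : ∫⁻ w, ρA w ≠ ⊤ := by
    have := ((SchwartzMap.fderivCLM ℝ E ℝ k).integrable_pow_mul volume 1).2.ne
    convert this using 3 with w
    simp [ρA, enorm_mul, mul_comm]
  have hBfin : ∫⁻ w, ρB w ≠ ⊤ := (k.integrable (μ := volume)).2.ne
  have := isFiniteMeasure_withDensity hAfin
  have := isFiniteMeasure_withDensity hBfin
  let μA : Measure (E × ℝ) := (volume.withDensity ρA).prod (volume.restrict (Set.Icc 0 1))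
  let μB : Measure (E × ℝ) := (volume.withDensity ρB).prod (Measure.dirac 1)
  let μ : Measure (E × ℝ) := c • (μA + μB)
  have : IsFiniteMeasure μ := Measure.smul_finite _ hc
  let τ : E × ℝ → E := fun p => p.2 • p.1
  have hτ : Measurable τ := by fun_prop
  have hconv := conv_bound (volume : Measure E) μ τ hτ (fun w => ‖fderiv ℝ u w‖ₑ) hmu r hr
  have hmass : μ Set.univ = c * ((∫⁻ w, ρA w) + ∫⁻ w, ρB w) := by
    simp only [μ, μA, μB, Measure.smul_apply, Measure.add_apply, smul_eq_mul]
    rw [← Set.univ_prod_univ, Measure.prod_prod, Measure.prod_prod]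
    simp
  have hgn : eLpNorm (fun w => ‖fderiv ℝ u w‖ₑ) r (volume : Measure E) =
      eLpNorm (fun x => ‖fderiv ℝ u x‖) r volume := by
    refine eLpNorm_congr_enorm_ae (Filter.Eventually.of_forall fun x => ?_)
    simp
  rw [hmass, hgn] at hconv
  refine le_trans ?_ hconv
  refine eLpNorm_mono_enorm_ae ?_
  have hdiff : ∀ᵐ x : E, ∀ᵐ p : E × ℝ ∂(volume.prod (volume.restrict (Set.Icc (0:ℝ) 1))),
      DifferentiableAt ℝ u (x - p.2 • p.1) := by
    have hms : Measurable (fun z : E × (E × ℝ) => z.1 - z.2.2 • z.2.1) := by fun_prop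
    refine (Measure.ae_ae_comm (p := fun x (p : E × ℝ) => DifferentiableAt ℝ u (x - p.2 • p.1))
      (hms (measurableSet_of_differentiableAt ℝ u))).2 ?_
    refine Filter.Eventually.of_forall fun p => ?_
    exact (measurePreserving_sub_right volume (p.2 • p.1)).quasiMeasurePreserving.ae
      (hu.ae_differentiableAt (μ := volume))
  filter_upwards [hdiff] with x hx
  have hx' := Measure.ae_ae_of_ae_prod hx
  refine (hpt x).trans ?_
  rw [enorm_eq_self]
  have hmg : Measurable (fun p : E × ℝ => ‖fderiv ℝ u (x - τ p)‖ₑ) :=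
    hmu.comp (measurable_const.sub hτ)
  simp only [μ]
  rw [lintegral_smul_measure, lintegral_add_measure, smul_eq_mul]
  refine mul_le_mul_right ?_ _
  have hmB : Measurable (fun w : E => ‖k w‖ₑ * ‖fderiv ℝ u (x - w)‖ₑ) :=
    hmk0.mul (hmu.comp (measurable_const.sub measurable_id))
  rw [lintegral_add_right _ hmB]
  refine add_le_add ?_ (le_of_eq ?_)
  · simp only [μA]
    rw [lintegral_prod _ hmg.aemeasurable, lintegral_withDensity_eq_lintegral_mul _ hρA
      hmg.lintegral_prod_right']
    refine lintegral_mono_ae ?_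
    filter_upwards [hx'] with w hw
    simp only [Pi.mul_apply, ρA, τ]
    rw [mul_assoc]
    refine mul_le_mul_right (ftc_bound hu x w hw) _
  · simp only [μB]
    rw [lintegral_prod _ hmg.aemeasurable, lintegral_withDensity_eq_lintegral_mul _ hmk0
      hmg.lintegral_prod_right']
    refine lintegral_congr fun w => ?_
    simp only [Pi.mul_apply, τ, ρB]
    rw [lintegral_dirac]
    simp

theorem lintegral_comp_smul_aux {E : Type*} [NormedAddCommGroup E] [NormedSpace ℝ E]
    [FiniteDimensional ℝ E] [MeasurableSpace E] [BorelSpace E] (μ : Measure E) [μ.IsAddHaarMeasure]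
    (G : E → ℝ≥0∞) (hG : Measurable G) {R : ℝ} (hR : 0 < R) :
    ∫⁻ w, G (R • w) ∂μ = ENNReal.ofReal ((R ^ Module.finrank ℝ E)⁻¹) * ∫⁻ w, G w ∂μ := by
  have h1 := lintegral_map (μ := μ) hG (measurable_const_smul R)
  rw [← h1]
  rw [Measure.map_addHaar_smul μ hR.ne', lintegral_smul_measure, smul_eq_mul, abs_of_nonneg (by positivity)]

open MeasureTheory ENNReal
open scoped RealInnerProductSpace

/-- Commutator estimate: for `h` Schwartz on `ℝⁿ` there is `C > 0` (depending only on `h`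
and `n`, not on `q`) such that for every `1 ≤ r ≤ ∞`, every Lipschitz vector field `u`
and every Schwartz `θ`, the commutator
`[Δ_q, u·∇]θ (x) = 2^{qn} ∫ h(2^q(x-y)) (u(y)-u(x))·∇θ(y) dy` satisfies
`‖[Δ_q, u·∇]θ‖_{L^r} ≤ C ‖∇u‖_{L^r} ‖θ‖_{L^∞}`. -/
theorem stmt_7 (n : ℕ) (hn : 0 < n)
    (h : SchwartzMap (EuclideanSpace ℝ (Fin n)) ℝ) :
    ∃ C : ℝ, 0 < C ∧
      ∀ (q : ℤ) (r : ℝ≥0∞), 1 ≤ r →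
        ∀ (u : EuclideanSpace ℝ (Fin n) → EuclideanSpace ℝ (Fin n)) (K : NNReal),
          LipschitzWith K u →
          ∀ θ : SchwartzMap (EuclideanSpace ℝ (Fin n)) ℝ,
            eLpNorm
                (fun x => (2 : ℝ) ^ ((q : ℝ) * (n : ℝ)) *
                  ∫ y, h ((2 : ℝ) ^ ((q : ℝ)) • (x - y)) * ⟪u y - u x, gradient (⇑θ) y⟫)
                r (volume : Measure (EuclideanSpace ℝ (Fin n))) ≤
              ENNReal.ofReal C *
                eLpNorm (fun x => ‖fderiv ℝ u x‖) r
                  (volume : Measure (EuclideanSpace ℝ (Fin n))) *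
                eLpNorm (⇑θ) ⊤ (volume : Measure (EuclideanSpace ℝ (Fin n))) := by
  let E := EuclideanSpace ℝ (Fin n)
  let mA : ℝ≥0∞ := ∫⁻ w : E, ‖fderiv ℝ h w‖ₑ * ‖w‖ₑ
  let mB : ℝ≥0∞ := ∫⁻ w : E, ‖h w‖ₑ
  have hmA : Measurable (fun w : E => ‖fderiv ℝ h w‖ₑ * ‖w‖ₑ) :=
    (measurable_fderiv ℝ h).enorm.mul measurable_enorm
  have hmB : Measurable (fun w : E => ‖h w‖ₑ) := h.continuous.measurable.enorm
  have hAfin : mA ≠ ⊤ := by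
    have := ((SchwartzMap.fderivCLM ℝ E ℝ h).integrable_pow_mul volume 1).2.ne
    convert this using 3 with w
    simp [enorm_mul, mul_comm]
  have hBfin : mB ≠ ⊤ := (h.integrable (μ := volume)).2.ne
  have hfin : n * (mA + mB) ≠ ⊤ :=
    ENNReal.mul_ne_top (by simp) (ENNReal.add_ne_top.2 ⟨hAfin, hBfin⟩)
  refine ⟨(n * (mA + mB)).toReal + 1, by positivity, ?_⟩
  intro q r hr u K hu θ
  set R : ℝ := (2 : ℝ) ^ (q : ℝ) with hRdef
  have hR : 0 < R := by positivity
  have hRn : (2 : ℝ) ^ ((q : ℝ) * (n : ℝ)) = R ^ n := by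
    rw [Real.rpow_mul (by norm_num), Real.rpow_natCast]
  rw [hRn]
  let k : SchwartzMap E ℝ := SchwartzMap.compCLMOfContinuousLinearEquiv ℝ
    (ContinuousLinearEquiv.smulLeft (Units.mk0 R hR.ne')) h
  have hk : ∀ w, k w = h (R • w) := fun w => rfl
  have hk' : ∀ w, fderiv ℝ k w = R • fderiv ℝ h (R • w) := by
    intro w
    have : (k : E → ℝ) = fun w => h (R • w) := rfl
    rw [this, fderiv_comp_smul]
  have hcore := core_bound n k θ hu r hr
  have hmkA : ∫⁻ w : E, ‖fderiv ℝ k w‖ₑ * ‖w‖ₑ = ENNReal.ofReal ((R ^ n)⁻¹) * mA := by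
    have := lintegral_comp_smul_aux (volume : Measure E) _ hmA hR
    rw [finrank_euclideanSpace_fin] at this
    rw [← this]
    refine lintegral_congr fun w => ?_
    rw [hk', enorm_smul, enorm_smul]; ring
  have hmkB : ∫⁻ w : E, ‖k w‖ₑ = ENNReal.ofReal ((R ^ n)⁻¹) * mB := by
    have := lintegral_comp_smul_aux (volume : Measure E) _ hmB hR
    rw [finrank_euclideanSpace_fin] at this
    rw [← this]
    rfl
  rw [hmkA, hmkB] at hcore
  have hsc : eLpNorm (fun x => R ^ n * ∫ y, h (R • (x - y)) * ⟪u y - u x, gradient (⇑θ) y⟫)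
      r (volume : Measure E) = ENNReal.ofReal (R ^ n) *
      eLpNorm (fun x => ∫ y, k (x - y) * ⟪u y - u x, gradient (⇑θ) y⟫) r volume := by
    have := eLpNorm_const_smul (R ^ n)
      (fun x : E => ∫ y, k (x - y) * ⟪u y - u x, gradient (⇑θ) y⟫) r volume
    rw [Real.enorm_of_nonneg (by positivity)] at this
    exact this
  rw [hsc]
  have hone : ENNReal.ofReal (R ^ n) * ENNReal.ofReal ((R ^ n)⁻¹) = 1 := by
    rw [← ENNReal.ofReal_mul (by positivity), mul_inv_cancel₀ (by positivity), ENNReal.ofReal_one]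
  have hC : n * (mA + mB) ≤ ENNReal.ofReal ((n * (mA + mB)).toReal + 1) := by
    calc _ = ENNReal.ofReal ((n * (mA + mB)).toReal) := (ENNReal.ofReal_toReal hfin).symm
      _ ≤ _ := ENNReal.ofReal_le_ofReal (by linarith)
  calc _ ≤ _ := mul_le_mul_right hcore _
    _ = (ENNReal.ofReal (R ^ n) * ENNReal.ofReal ((R ^ n)⁻¹)) * (n * (mA + mB)) *
        eLpNorm (fun x => ‖fderiv ℝ u x‖) r volume * eLpNorm θ ⊤ volume := by ring
    _ = (n * (mA + mB)) *
        eLpNorm (fun x => ‖fderiv ℝ u x‖) r volume * eLpNorm θ ⊤ volume := by rw [hone, one_mul]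
    _ ≤ _ := by gcongr
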